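/- Let F be a geodesic line foliation of a complete Riemannian plane M. Then the leaf space M/F, equipped with the quotient topology, is Hausdorff, and is homeomorphic to the real line ℝ. -/

import Mathlib

open Set Filter MeasureTheory Metric
open scoped ENNReal NNReal Topology

/-- A (geodesic) line in a metric space: a map `γ : ℝ → X` with
`d(γ s, γ t) = |s - t|` for all `s, t`, i.e. an isometric embedding of `ℝ`
(in a Riemannian manifold such a curve is automatically a geodesic that
minimizes the distance between any two of its points). -/
def IsLine {X : Type} [MetricSpace X] (γ : ℝ → X) : Prop :=
  ∀ s t : ℝ, dist (γ s) (γ t) = |s - t|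

/-- A (geodesic) ray: a map `γ : ℝ → X` with `d(γ s, γ t) = |s - t|`
for all `s, t ≥ 0`, i.e. an isometric embedding of `[0, ∞)`. -/
def IsRay {X : Type} [MetricSpace X] (γ : ℝ → X) : Prop :=
  ∀ s t : ℝ, 0 ≤ s → 0 ≤ t → dist (γ s) (γ t) = |s - t|

/-- A minimizing (unit-speed) geodesic segment defined on `[a, b]`. -/
def IsMinimizingSegment {X : Type} [MetricSpace X] (σ : ℝ → X) (a b : ℝ) : Prop :=
  ∀ s ∈ Set.Icc a b, ∀ t ∈ Set.Icc a b, dist (σ s) (σ t) = |s - t|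

/-- Two rays are asymptotes if they stay within bounded distance of each other. -/
def Asymptotic {X : Type} [MetricSpace X] (γ σ : ℝ → X) : Prop :=
  ∃ C : ℝ, 0 < C ∧ ∀ t : ℝ, 0 ≤ t → dist (γ t) (σ t) ≤ C

/-- A set is geodesically convex if every minimizing geodesic segment
between two of its points is contained in it. -/
def GeodesicallyConvex {X : Type} [MetricSpace X] (A : Set X) : Prop :=
  ∀ (σ : ℝ → X) (a b : ℝ), a ≤ b → IsMinimizingSegment σ a b →
    σ a ∈ A → σ b ∈ A → ∀ t ∈ Set.Icc a b, σ t ∈ A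

/-- Abstract packaging of a complete Riemannian surface: the underlying metric
space of the Riemannian metric, together with its geodesics, its Gaussian
curvature, its Riemannian area measure, the Riemannian angle, and the
(differential-geometric, hence here abstractly recorded) property of having
no conjugate points. -/
structure RiemannianSurface where
  /-- the underlying set of points -/
  M : Type
  /-- the distance function induced by the Riemannian metric -/
  [metric : MetricSpace M]
  [mble : MeasurableSpace M]
  borel : BorelSpace M
  /-- the Riemannian metric is complete -/
  complete : CompleteSpace M
  /-- the complete unit-speed geodesics of the Riemannian metric -/
  IsGeodesic : (ℝ → M) → Prop
  /-- the unit-speed geodesic segments `σ : [a, b] → M` of the Riemannian metric -/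
  IsGeodesicSegment : (ℝ → M) → ℝ → ℝ → Prop
  /-- a metric line is a (complete, globally minimizing) geodesic -/
  line_isGeodesic : ∀ γ : ℝ → M, IsLine γ → IsGeodesic γ
  /-- the restriction of a complete geodesic to an interval is a geodesic segment -/
  geodesic_isGeodesicSegment : ∀ (γ : ℝ → M) (a b : ℝ), IsGeodesic γ → IsGeodesicSegment γ a b
  /-- a minimizing segment is a geodesic segment -/
  minimizing_isGeodesicSegment : ∀ (σ : ℝ → M) (a b : ℝ),
    IsMinimizingSegment σ a b → IsGeodesicSegment σ a b
  /-- the Gaussian curvature -/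
  K : M → ℝ
  /-- the Riemannian area measure -/
  area : MeasureTheory.Measure M
  /-- `angle p x y` is the angle `∠ₚ(x, y)` at `p` subtended by `x` and `y`
  (the angle at `p` between the initial directions of minimizing geodesics
  from `p` to `x` and to `y`) -/
  angle : M → M → M → ℝ
  /-- the Riemannian metric has no conjugate points: no geodesic contains a pair
  of mutually conjugate points -/
  NoConjugatePoints : Prop

attribute [instance] RiemannianSurface.metric RiemannianSurface.mble

namespace RiemannianSurface

variable (S : RiemannianSurface)

/-- the total positive curvature `c₊(M) = ∫_M K⁺ dμ`, as an extended nonnegative real -/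
noncomputable def cPlus : ℝ≥0∞ := ∫⁻ x, ENNReal.ofReal (S.K x) ∂S.area

/-- `∫_M (-K⁻) dμ = -c₋(M)`, the absolute value of the total negative curvature,
as an extended nonnegative real -/
noncomputable def cMinus : ℝ≥0∞ := ∫⁻ x, ENNReal.ofReal (-S.K x) ∂S.area

/-- `M` admits total curvature if at least one of `c₊(M)`, `c₋(M)` is finite -/
def AdmitsTotalCurvature : Prop := S.cPlus ≠ ⊤ ∨ S.cMinus ≠ ⊤

/-- the total curvature `c(M) = c₊(M) + c₋(M) = ∫_M K dμ`, as an extended real -/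
noncomputable def totalCurvature : EReal := (S.cPlus : EReal) - (S.cMinus : EReal)

/-- the total curvature `c(A) = ∫_A K dμ` of a region `A ⊆ M`, as an extended real -/
noncomputable def cOn (A : Set S.M) : EReal :=
  ((∫⁻ x in A, ENNReal.ofReal (S.K x) ∂S.area : ℝ≥0∞) : EReal) -
    ((∫⁻ x in A, ENNReal.ofReal (-S.K x) ∂S.area : ℝ≥0∞) : EReal)

/-- `M` satisfies the visibility axiom at `p`: for every `ε > 0` there is `R > 0`
such that every geodesic segment staying at distance `> R` from `p` subtends an
angle at most `ε` at `p`. -/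
def VisibilityAt (p : S.M) : Prop :=
  ∀ ε : ℝ, 0 < ε → ∃ R : ℝ, 0 < R ∧
    ∀ (σ : ℝ → S.M) (a b : ℝ), a ≤ b → S.IsGeodesicSegment σ a b →
      (∀ t ∈ Set.Icc a b, R < dist p (σ t)) → S.angle p (σ a) (σ b) ≤ ε

end RiemannianSurface

/-- A foliation of the surface all of whose leaves are geodesic lines:
a partition of `M` into leaves, each of which is the image of a geodesic line,
which is locally trivial (each point has a foliated chart whose plaques lie
in the leaves). -/
structure GeodesicLineFoliation (S : RiemannianSurface) where
  /-- the leaves of the foliation -/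
  leaves : Set (Set S.M)
  covers : ∀ x : S.M, ∃ L ∈ leaves, x ∈ L
  eq_of_inter : ∀ L₁ ∈ leaves, ∀ L₂ ∈ leaves, (L₁ ∩ L₂).Nonempty → L₁ = L₂
  /-- every leaf is a geodesic line -/
  leaf_is_geodesic_line : ∀ L ∈ leaves,
    ∃ γ : ℝ → S.M, IsLine γ ∧ S.IsGeodesic γ ∧ Set.range γ = L
  /-- local triviality: foliated charts whose plaques lie in leaves -/
  locally_trivial : ∀ x : S.M, ∃ U : Set S.M, IsOpen U ∧ x ∈ U ∧
    ∃ φ : ↥U ≃ₜ (ℝ × ℝ), ∀ c : ℝ, ∃ L ∈ leaves, ∀ t : ℝ, (φ.symm (t, c)).1 ∈ L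

/-- any two leaves of the foliation are at finite Hausdorff distance from each other -/
def GeodesicLineFoliation.BoundedHausdorffDistance {S : RiemannianSurface}
    (F : GeodesicLineFoliation S) : Prop :=
  ∀ L₁ ∈ F.leaves, ∀ L₂ ∈ F.leaves, EMetric.hausdorffEdist L₁ L₂ ≠ ⊤

/-! Leaves are minimizing, so a leaf that returns close to a point stays close to it on the way;
hence locally a leaf has a single plaque, and limits of leaf segments slide along leaves. The leaf
relation is therefore closed and `M/F` is a Hausdorff `1`-manifold. Circle-valued functions on `M/F`
lift to `ℝ`, because `M` is simply connected and leaves are connected. Collapsing the complement of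
a small arc of `M/F` to a point gives a circle-valued function whose lift shows that every point of
the arc separates `M/F`. Given countably many such functions `F n` covering `M/F` and a base point
`p`, the sum `∑ 2⁻ⁿ |F n x - F n p|`, signed by the side of `p` on which `x` lies, is continuous and
locally injective, and a local homeomorphism from a connected Hausdorff space to `ℝ` is
injective. -/

section LocalHomeomorph

variable {X Y : Type*} [TopologicalSpace X] [TopologicalSpace Y]

theorem exists_openPartialHomeomorph_of_injOn {f : X → Y} (hf : Continuous f) (ho : IsOpenMap f)
    {U : Set X} (hU : IsOpen U) (hne : U.Nonempty) (hi : InjOn f U) :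
    ∃ e : OpenPartialHomeomorph X Y, e.source = U ∧ ⇑e = f := by
  have : Nonempty X := hne.to_type
  exact ⟨OpenPartialHomeomorph.ofContinuousOpen (hi.toPartialEquiv f U) hf.continuousOn ho hU,
    rfl, rfl⟩

theorem isOpen_image_of_continuousOn_of_injOn {U : Set ℝ} (hU : IsOpen U) {f : ℝ → ℝ}
    (hc : ContinuousOn f U) (hi : InjOn f U) : IsOpen (f '' U) := by
  rw [isOpen_iff_mem_nhds]
  rintro _ ⟨x, hx, rfl⟩
  obtain ⟨δ, hδ, hs⟩ := Metric.nhds_basis_closedBall.mem_iff.1 (hU.mem_nhds hx)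
  rw [Real.closedBall_eq_Icc] at hs
  have hle : x - δ ≤ x + δ := by linarith
  have hl : x - δ ∈ Icc (x - δ) (x + δ) := left_mem_Icc.2 hle
  have hm : x ∈ Icc (x - δ) (x + δ) := ⟨by linarith, by linarith⟩
  have hr : x + δ ∈ Icc (x - δ) (x + δ) := right_mem_Icc.2 hle
  have hc' := hc.mono hs
  rcases hc'.strictMonoOn_of_injOn_Icc' hle (hi.mono hs) with h | h
  · exact mem_of_superset (Icc_mem_nhds (h hl hm (by linarith)) (h hm hr (by linarith)))
      ((intermediate_value_Icc hle hc').trans (image_mono hs))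
  · exact mem_of_superset (Icc_mem_nhds (h hm hr (by linarith)) (h hl hm (by linarith)))
      ((intermediate_value_Icc' hle hc').trans (image_mono hs))

theorem isOpenMap_of_isLocallyInjective [ChartedSpace ℝ X] {f : X → ℝ} (hf : Continuous f)
    (hi : IsLocallyInjective f) : IsOpenMap f := by
  rw [isOpenMap_iff_nhds_le]
  intro x N hN
  obtain ⟨U, hU, hxU, hiU⟩ := hi x
  let e := chartAt ℝ x
  have hxe : x ∈ e.source := mem_chart_source ℝ x
  have hW : IsOpen (e.target ∩ e.symm ⁻¹' (U ∩ interior (f ⁻¹' N))) :=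
    e.isOpen_inter_preimage_symm (hU.inter isOpen_interior)
  have hopen := isOpen_image_of_continuousOn_of_injOn (f := f ∘ e.symm) hW
    (hf.comp_continuousOn (e.continuousOn_symm.mono inter_subset_left))
    fun s hs t ht hst => e.symm.injOn hs.1 ht.1 (hiU hs.2.1 ht.2.1 hst)
  refine mem_of_superset (hopen.mem_nhds ⟨e x, ⟨e.map_source hxe, ?_⟩, ?_⟩) ?_
  · rw [mem_preimage, e.left_inv hxe]
    exact ⟨hxU, mem_interior_iff_mem_nhds.2 hN⟩
  · rw [Function.comp_apply, e.left_inv hxe]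
  · rintro _ ⟨t, ht, rfl⟩
    have hN' : e.symm t ∈ f ⁻¹' N := interior_subset ht.2.2
    exact hN'

theorem isLocalHomeomorph_of_isLocallyInjective [ChartedSpace ℝ X] {f : X → ℝ}
    (hf : Continuous f) (hi : IsLocallyInjective f) : IsLocalHomeomorph f := by
  refine IsLocalHomeomorph.mk f fun x => ?_
  obtain ⟨U, hU, hxU, hiU⟩ := hi x
  obtain ⟨e, rfl, he⟩ := exists_openPartialHomeomorph_of_injOn hf
    (isOpenMap_of_isLocallyInjective hf hi) hU ⟨x, hxU⟩ hiU
  exact ⟨e, hxU, fun y _ => congrFun he.symm y⟩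

/-- A sheet of `f`: a connected open set on which `f` is injective. Sheets are the pieces from
which the injectivity of a local homeomorphism to `ℝ` is assembled. -/
structure IsSheet (f : X → Y) (U : Set X) : Prop where
  isOpen : IsOpen U
  isPreconnected : IsPreconnected U
  injOn : InjOn f U

theorem exists_isSheet_mem {f : X → ℝ} (hf : IsLocalHomeomorph f) (x : X) :
    ∃ U, IsSheet f U ∧ x ∈ U := by
  obtain ⟨e, hxe, rfl⟩ := hf x
  obtain ⟨δ, hδ, hball⟩ := Metric.isOpen_iff.1 e.open_target (e x) (e.map_source hxe)
  have himage : e.symm '' ball (e x) δ ⊆ e.source := by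
    rintro _ ⟨t, ht, rfl⟩
    exact e.map_target (hball ht)
  refine ⟨e.symm '' ball (e x) δ, ⟨?_, ?_, e.injOn.mono himage⟩,
    e x, mem_ball_self hδ, e.left_inv hxe⟩
  · exact e.symm.isOpen_image_of_subset_source isOpen_ball hball
  · exact (isPreconnected_ball).image _ (e.continuousOn_symm.mono hball)

/-- The inverses of `f` on two overlapping sheets are lifts of an interval through `f`, so they
agree on the whole overlap of the images. -/
theorem IsSheet.union [T2Space X] {f : X → ℝ} (hf : IsLocalHomeomorph f) {U V : Set X}
    (hU : IsSheet f U) (hV : IsSheet f V) (hUV : (U ∩ V).Nonempty) : IsSheet f (U ∪ V) := by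
  obtain ⟨p, hpU, hpV⟩ := hUV
  refine ⟨hU.isOpen.union hV.isOpen, hU.isPreconnected.union p hpU hpV hV.isPreconnected, ?_⟩
  obtain ⟨e, rfl, he⟩ := exists_openPartialHomeomorph_of_injOn hf.continuous hf.isOpenMap
    hU.isOpen ⟨p, hpU⟩ hU.injOn
  obtain ⟨e', rfl, he'⟩ := exists_openPartialHomeomorph_of_injOn hf.continuous hf.isOpenMap
    hV.isOpen ⟨p, hpV⟩ hV.injOn
  have hconn : IsPreconnected (e.target ∩ e'.target) := by
    rw [← e.image_source_eq_target, ← e'.image_source_eq_target]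
    exact ((hU.isPreconnected.image _ e.continuousOn).ordConnected.inter
      (hV.isPreconnected.image _ e'.continuousOn).ordConnected).isPreconnected
  have hp : e p = e' p := by rw [he, he']
  have heq : EqOn e.symm e'.symm (e.target ∩ e'.target) := by
    refine (T2Space.isSeparatedMap f).eqOn_of_comp_eqOn hf.isLocallyInjective hconn
      (e.continuousOn_symm.mono inter_subset_left) (e'.continuousOn_symm.mono inter_subset_right)
      (fun t ht => ?_) (a := e p) ⟨e.map_source hpU, hp ▸ e'.map_source hpV⟩ ?_
    · calc f (e.symm t) = t := by rw [← he, e.right_inv ht.1]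
        _ = f (e'.symm t) := by rw [← he', e'.right_inv ht.2]
    · rw [e.left_inv hpU, hp, e'.left_inv hpV]
  have hcross : ∀ x ∈ e.source, ∀ y ∈ e'.source, f x = f y → x = y := by
    intro x hx y hy hfxy
    have hxy : e x = e' y := by rw [he, he', hfxy]
    have ht : e x ∈ e.target ∩ e'.target := ⟨e.map_source hx, hxy ▸ e'.map_source hy⟩
    calc x = e.symm (e x) := (e.left_inv hx).symm
      _ = e'.symm (e' y) := by rw [heq ht, hxy]
      _ = y := e'.left_inv hy
  rintro x (hx | hx) y (hy | hy) hxy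
  · exact hU.injOn hx hy hxy
  · exact hcross x hx y hy hxy
  · exact (hcross y hy x hx hxy.symm).symm
  · exact hV.injOn hx hy hxy

theorem injective_of_isLocalHomeomorph_real [T2Space X] [PreconnectedSpace X] {f : X → ℝ}
    (hf : IsLocalHomeomorph f) : Function.Injective f := by
  intro x y hxy
  have hclopen : IsClopen (⋃₀ {U | IsSheet f U ∧ x ∈ U}) := by
    refine ⟨?_, isOpen_sUnion fun U hU => hU.1.isOpen⟩
    rw [← closure_subset_iff_isClosed]
    intro z hz
    obtain ⟨V, hV, hzV⟩ := exists_isSheet_mem hf z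
    obtain ⟨p, hpV, U, ⟨hU, hxU⟩, hpU⟩ := mem_closure_iff.1 hz V hV.isOpen hzV
    exact ⟨U ∪ V, ⟨hU.union hf hV ⟨p, hpU, hpV⟩, Or.inl hxU⟩, Or.inr hzV⟩
  obtain ⟨U₀, hU₀⟩ := exists_isSheet_mem hf x
  have huniv := hclopen.eq_univ ⟨x, U₀, hU₀, hU₀.2⟩
  obtain ⟨U, ⟨hU, hxU⟩, hyU⟩ := huniv ▸ mem_univ y
  exact hU.injOn hxU hyU hxy

theorem nonempty_homeomorph_Ioo_real {a b : ℝ} (hab : a < b) : Nonempty (Ioo a b ≃ₜ ℝ) := by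
  let B := OpenPartialHomeomorph.univBall ((a + b) / 2) ((b - a) / 2)
  have hsource : B.source = univ := OpenPartialHomeomorph.univBall_source _ _
  have htarget : B.target = Ioo a b := by
    rw [OpenPartialHomeomorph.univBall_target _ (by linarith), Real.ball_eq_Ioo]
    congr 1 <;> ring
  exact ⟨(Homeomorph.setCongr htarget).symm.trans (B.toHomeomorphSourceTarget.symm.trans
    ((Homeomorph.setCongr hsource).trans (Homeomorph.Set.univ ℝ)))⟩

theorem exists_eq_Ioo_of_isOpen_of_isConnected {s : Set ℝ} (ho : IsOpen s) (hc : IsConnected s)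
    (hb : BddBelow s) (ha : BddAbove s) : ∃ a b, a < b ∧ s = Ioo a b := by
  have hs : s = Ioo (sInf s) (sSup s) := by
    refine Subset.antisymm ?_ (hc.Ioo_csInf_csSup_subset hb ha)
    rw [← interior_Icc]
    exact interior_maximal (subset_Icc_csInf_csSup hb ha) ho
  obtain ⟨x, hx⟩ := hc.nonempty
  rw [hs] at hx
  exact ⟨_, _, hx.1.trans hx.2, hs⟩

theorem nonempty_homeomorph_real_of_isOpenEmbedding [ConnectedSpace X] {f : X → ℝ}
    (hf : Topology.IsOpenEmbedding f) : Nonempty (X ≃ₜ ℝ) := by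
  obtain ⟨e⟩ := nonempty_homeomorph_Ioo_real (zero_lt_one (α := ℝ))
  let g : X → ℝ := fun x => e.symm (f x)
  have hg : Topology.IsOpenEmbedding g :=
    isOpen_Ioo.isOpenEmbedding_subtypeVal.comp (e.symm.isOpenEmbedding.comp hf)
  have hrange : range g ⊆ Ioo 0 1 := range_subset_iff.2 fun x => (e.symm (f x)).2
  obtain ⟨a, b, hab, hIoo⟩ := exists_eq_Ioo_of_isOpen_of_isConnected hg.isOpen_range
    (isConnected_range hg.continuous) (bddBelow_Ioo.mono hrange) (bddAbove_Ioo.mono hrange)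
  obtain ⟨e'⟩ := nonempty_homeomorph_Ioo_real hab
  exact ⟨hg.isEmbedding.toHomeomorph.trans ((Homeomorph.setCongr hIoo).trans e')⟩

end LocalHomeomorph

section Collapse

variable {Q : Type*} [TopologicalSpace Q]

/-- Every circle-valued map on `Q` lifts to a real-valued one. For quotients of a simply
connected space by connected fibres this replaces simple connectedness. -/
def HasCircleLifts (Q : Type*) [TopologicalSpace Q] : Prop :=
  ∀ (T : ℝ) (f : C(Q, AddCircle T)), ∃ F : C(Q, ℝ), ∀ q, (F q : AddCircle T) = f q

/-- `F` is a coordinate on the arc `σ` and maps everything off the open arc to an endpoint of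
`[a, b]`. The existence of such an `F` means that every point of the open arc separates `Q`. -/
structure IsArcCollapse (F : Q → ℝ) (σ : ℝ → Q) (a b : ℝ) : Prop where
  lt : a < b
  continuous : Continuous F
  continuousOn : ContinuousOn σ (Icc a b)
  apply_apply : ∀ t ∈ Icc a b, F (σ t) = t
  eq_or_eq : ∀ x, x ∉ σ '' Ioo a b → F x = a ∨ F x = b

namespace IsArcCollapse

variable {F : Q → ℝ} {σ : ℝ → Q} {a b : ℝ}

theorem mem_Icc (h : IsArcCollapse F σ a b) (x : Q) : F x ∈ Icc a b := by
  by_cases hx : x ∈ σ '' Ioo a b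
  · obtain ⟨t, ht, rfl⟩ := hx
    exact (h.apply_apply t (Ioo_subset_Icc_self ht)).symm ▸ Ioo_subset_Icc_self ht
  · rcases h.eq_or_eq x hx with hF | hF <;> rw [hF]
    exacts [left_mem_Icc.2 h.lt.le, right_mem_Icc.2 h.lt.le]

theorem apply_eq_self_of_mem_Ioo (h : IsArcCollapse F σ a b) {x : Q} (hx : F x ∈ Ioo a b) :
    σ (F x) = x := by
  by_contra hne
  have hx' : x ∉ σ '' Ioo a b := by
    rintro ⟨t, ht, rfl⟩
    exact hne (congrArg σ (h.apply_apply t (Ioo_subset_Icc_self ht)))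
  rcases h.eq_or_eq x hx' with hF | hF
  exacts [hx.1.ne' hF, hx.2.ne hF]

theorem eq_of_apply_eq (h : IsArcCollapse F σ a b) {x y : Q} (hx : x ∈ σ '' Ioo a b)
    (hxy : F y = F x) : y = x := by
  obtain ⟨t, ht, rfl⟩ := hx
  rw [h.apply_apply t (Ioo_subset_Icc_self ht)] at hxy
  rw [← hxy] at ht ⊢
  exact (h.apply_eq_self_of_mem_Ioo ht).symm

theorem neg (h : IsArcCollapse F σ a b) :
    IsArcCollapse (fun x => -F x) (fun t => σ (-t)) (-b) (-a) where
  lt := neg_lt_neg h.lt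
  continuous := h.continuous.neg
  continuousOn := h.continuousOn.comp continuousOn_neg fun _ ht =>
    ⟨le_neg_of_le_neg ht.2, neg_le_of_neg_le ht.1⟩
  apply_apply t ht := by
    rw [h.apply_apply _ ⟨le_neg_of_le_neg ht.2, neg_le_of_neg_le ht.1⟩, neg_neg]
  eq_or_eq x hx := by
    refine (h.eq_or_eq x fun hx' => hx ?_).symm.imp (congrArg _) (congrArg _)
    obtain ⟨t, ht, rfl⟩ := hx'
    exact ⟨-t, ⟨neg_lt_neg ht.2, neg_lt_neg ht.1⟩, congrArg σ (neg_neg t)⟩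

/-- A part of `{F < c}` that misses the arc lies in `{F = a}`, so it is clopen in `Q`. -/
theorem disjoint_of_image_Ico_subset [PreconnectedSpace Q] (h : IsArcCollapse F σ a b) {c : ℝ}
    (hac : a < c) (hcb : c ≤ b) {U V : Set Q} (hU : IsOpen U) (hV : IsOpen V)
    (hcover : {x | F x < c} ⊆ U ∪ V) (hdisj : {x | F x < c} ∩ (U ∩ V) = ∅)
    (hσ : σ '' Ico a c ⊆ U) : {x | F x < c} ∩ V = ∅ := by
  have hUV : ∀ x, F x < c → x ∈ V → x ∉ U := fun x hx hxV hxU =>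
    (hdisj.subset ⟨hx, hxU, hxV⟩ : x ∈ (∅ : Set Q))
  have hclosed : {x | F x < c} ∩ V = {x | F x ≤ a} \ U := by
    ext x
    constructor
    · rintro ⟨hx, hxV⟩
      refine ⟨not_lt.1 fun hax => hUV x hx hxV (hσ ⟨F x, ⟨hax.le, hx⟩, ?_⟩), hUV x hx hxV⟩
      exact h.apply_eq_self_of_mem_Ioo ⟨hax, lt_of_lt_of_le hx hcb⟩
    · rintro ⟨hx, hxU⟩
      have hxc : F x < c := lt_of_le_of_lt hx hac
      exact ⟨hxc, (hcover hxc).resolve_left hxU⟩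
  have hclopen : IsClopen ({x | F x < c} ∩ V) :=
    ⟨hclosed ▸ (isClosed_le h.continuous continuous_const).sdiff hU,
      (isOpen_lt h.continuous continuous_const).inter hV⟩
  refine (isClopen_iff.1 hclopen).resolve_right fun huniv => ?_
  have hσa : σ a ∈ {x | F x ≤ a} \ U := hclosed ▸ huniv ▸ mem_univ _
  exact hσa.2 (hσ ⟨a, left_mem_Ico.2 hac, rfl⟩)

theorem isPreconnected_lt [PreconnectedSpace Q] (h : IsArcCollapse F σ a b) (c : ℝ) :
    IsPreconnected {x | F x < c} := by
  rcases le_or_gt c a with hca | hac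
  · have hempty : {x | F x < c} = ∅ :=
      eq_empty_of_forall_notMem fun x hx => (hca.trans (h.mem_Icc x).1).not_gt hx
    exact hempty ▸ isPreconnected_empty
  rcases lt_or_ge b c with hbc | hcb
  · have huniv : {x | F x < c} = univ := eq_univ_of_forall fun x => (h.mem_Icc x).2.trans_lt hbc
    exact huniv ▸ isPreconnected_univ
  have hIco : Ico a c ⊆ Icc a b := fun t ht => ⟨ht.1, ht.2.le.trans hcb⟩
  have hσlt : σ '' Ico a c ⊆ {x | F x < c} := by
    rintro _ ⟨t, ht, rfl⟩
    exact (h.apply_apply t (hIco ht)).trans_lt ht.2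
  have hσ := isPreconnected_Ico.image σ (h.continuousOn.mono hIco)
  rw [isPreconnected_iff_subset_of_disjoint]
  intro U V hU hV hcover hdisj
  rcases isPreconnected_iff_subset_of_disjoint.1 hσ U V hU hV (hσlt.trans hcover)
    (subset_empty_iff.1 ((inter_subset_inter_left _ hσlt).trans hdisj.subset)) with hσU | hσV
  · have hempty := h.disjoint_of_image_Ico_subset hac hcb hU hV hcover hdisj hσU
    exact Or.inl fun x hx => (hcover hx).resolve_right fun hxV => hempty.subset ⟨hx, hxV⟩
  · rw [union_comm] at hcover
    rw [inter_comm U] at hdisj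
    have hempty := h.disjoint_of_image_Ico_subset hac hcb hV hU hcover hdisj hσV
    exact Or.inr fun x hx => (hcover hx).resolve_right fun hxU => hempty.subset ⟨hx, hxU⟩

theorem isPreconnected_gt [PreconnectedSpace Q] (h : IsArcCollapse F σ a b) (c : ℝ) :
    IsPreconnected {x | c < F x} := by
  simpa only [neg_lt_neg_iff] using h.neg.isPreconnected_lt (-c)

end IsArcCollapse

theorem exists_eq_add_int_mul_of_coe_eq {T x y : ℝ} (h : (x : AddCircle T) = y) :
    ∃ n : ℤ, x = y + n * T := by
  obtain ⟨n, hn⟩ := (QuotientAddGroup.eq_iff_sub_mem.1 h : x - y ∈ AddSubgroup.zmultiples T)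
  exact ⟨n, sub_eq_iff_eq_add'.1 (hn.symm.trans (zsmul_eq_mul T n))⟩

theorem exists_continuousMap_addCircle_collapse [T2Space Q] (E : OpenPartialHomeomorph Q ℝ)
    {a b : ℝ} (hab : a < b) (hE : Icc a b ⊆ E.target) :
    ∃ f : C(Q, AddCircle (b - a)), (∀ t ∈ Icc a b, f (E.symm t) = t) ∧
      ∀ x, x ∉ E.symm '' Ioo a b → f x = a := by
  classical
  have hb : (b : AddCircle (b - a)) = a := by
    rw [← AddCircle.coe_add_period (b - a) a, add_sub_cancel]
  have hclosed : IsClosed (E.symm '' Icc a b) :=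
    (isCompact_Icc.image_of_continuousOn (E.continuousOn_symm.mono hE)).isClosed
  have hopen : IsOpen (E.symm '' Ioo a b) :=
    E.symm.isOpen_image_of_subset_source isOpen_Ioo (Ioo_subset_Icc_self.trans hE)
  let f : Q → AddCircle (b - a) := (E.symm '' Icc a b).piecewise (fun x => (E x : ℝ)) fun _ => a
  have hf : ∀ t ∈ Icc a b, f (E.symm t) = t := fun t ht => by
    simp only [f, piecewise_eq_of_mem _ _ _ (mem_image_of_mem _ ht), E.right_inv (hE ht)]
  have hf' : ∀ x, x ∉ E.symm '' Ioo a b → f x = a := by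
    intro x hx
    by_cases hx' : x ∈ E.symm '' Icc a b
    · obtain ⟨t, ht, rfl⟩ := hx'
      rw [hf t ht]
      rcases eq_endpoints_or_mem_Ioo_of_mem_Icc ht with rfl | rfl | ht'
      exacts [rfl, hb, absurd (mem_image_of_mem _ ht') hx]
    · exact piecewise_eq_of_notMem _ _ _ hx'
  have hcont : ContinuousOn f (E.symm '' Icc a b ∪ (E.symm '' Ioo a b)ᶜ) := by
    refine ContinuousOn.union_of_isClosed ?_ (continuousOn_const.congr hf') hclosed
      hopen.isClosed_compl
    refine ((AddCircle.continuous_mk' _).comp_continuousOn (E.continuousOn.mono ?_)).congr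
      fun x hx => piecewise_eq_of_mem _ _ _ hx
    exact image_subset_iff.2 fun t ht => E.map_target (hE ht)
  have huniv : E.symm '' Icc a b ∪ (E.symm '' Ioo a b)ᶜ = univ :=
    univ_subset_iff.1 ((union_compl_self _).symm.subset.trans
      (union_subset_union_left _ (image_mono Ioo_subset_Icc_self)))
  exact ⟨⟨f, continuousOn_univ.1 (huniv ▸ hcont)⟩, hf, hf'⟩

/-- The values `a + k (b - a)` of the lift off the open arc are clamped to `a` or `b`. -/
theorem exists_isArcCollapse [T2Space Q] (hQ : HasCircleLifts Q) (E : OpenPartialHomeomorph Q ℝ)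
    {a b : ℝ} (hab : a < b) (hE : Icc a b ⊆ E.target) : ∃ F, IsArcCollapse F E.symm a b := by
  obtain ⟨f, hf, hfa⟩ := exists_continuousMap_addCircle_collapse E hab hE
  obtain ⟨F, hF⟩ := hQ _ f
  have hσ : ContinuousOn E.symm (Icc a b) := E.continuousOn_symm.mono hE
  have ha : a ∈ Icc a b := left_mem_Icc.2 hab.le
  obtain ⟨n, hn⟩ := exists_eq_add_int_mul_of_coe_eq ((hF (E.symm a)).trans (hf a ha))
  have hcoe : ∀ t ∈ Icc a b, F (E.symm t) = t + n * (b - a) := by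
    refine (AddCircle.isCoveringMap_coe (b - a)).eqOn_of_comp_eqOn isPreconnected_Icc
      (F.continuous.comp_continuousOn hσ) (by fun_prop) (fun t ht => ?_) ha hn
    have hperiod : ((n * (b - a) : ℝ) : AddCircle (b - a)) = 0 :=
      (AddCircle.coe_eq_zero_iff _).2 ⟨n, zsmul_eq_mul _ _⟩
    simp only [Function.comp_apply, hF, hf t ht, AddCircle.coe_add, hperiod, add_zero]
  refine ⟨fun x => max a (min b (F x - n * (b - a))), hab, by fun_prop, hσ, fun t ht => ?_,
    fun x hx => ?_⟩
  · simp only [hcoe t ht, add_sub_cancel_right, min_eq_right ht.2, max_eq_right ht.1]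
  · obtain ⟨k, hk⟩ := exists_eq_add_int_mul_of_coe_eq ((hF x).trans (hfa x hx))
    rcases le_or_gt k n with hkn | hkn
    · left
      have hle : (k : ℝ) ≤ n := mod_cast hkn
      exact max_eq_left ((min_le_right _ _).trans (by rw [hk]; nlinarith))
    · right
      have hle : (n : ℝ) + 1 ≤ k := mod_cast hkn
      simp only [min_eq_left (show b ≤ F x - n * (b - a) by rw [hk]; nlinarith),
        max_eq_right hab.le]

end Collapse

section CutFunction

variable {Q : Type*}

/-- A weighted sum of the coordinate distances to `p`; it increases along every arc that moves
away from `p`. -/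
noncomputable def cutDist (F : ℕ → Q → ℝ) (p x : Q) : ℝ :=
  ∑' n, (1 / 2) ^ n * |F n x - F n p|

theorem cutDist_self (F : ℕ → Q → ℝ) (p : Q) : cutDist F p p = 0 := by
  simp only [cutDist, sub_self, abs_zero, mul_zero, tsum_zero]

theorem cutDist_nonneg (F : ℕ → Q → ℝ) (p x : Q) : 0 ≤ cutDist F p x :=
  tsum_nonneg fun _ => by positivity

/-- `cutDist` with the sign recording on which side of `p` the coordinate `F k` places `x`. -/
noncomputable def signedCutDist (F : ℕ → Q → ℝ) (k : ℕ) (p x : Q) : ℝ :=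
  if F k p ≤ F k x then cutDist F p x else -cutDist F p x

theorem abs_signedCutDist (F : ℕ → Q → ℝ) (k : ℕ) (p x : Q) :
    |signedCutDist F k p x| = cutDist F p x := by
  unfold signedCutDist
  split_ifs
  · exact abs_of_nonneg (cutDist_nonneg F p x)
  · rw [abs_neg, abs_of_nonneg (cutDist_nonneg F p x)]

variable [TopologicalSpace Q]

/-- `F` cuts `Q` at every point of the open set `V`: each point of `V` is a fibre of `F`, and both
sides of every level of `F` are connected. -/
structure IsCutFunction (F : Q → ℝ) (V : Set Q) : Prop where
  isOpen : IsOpen V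
  continuous : Continuous F
  isPreconnected_lt : ∀ c, IsPreconnected {x | F x < c}
  isPreconnected_gt : ∀ c, IsPreconnected {x | c < F x}
  eq_of_apply_eq : ∀ x ∈ V, ∀ y, F y = F x → y = x
  abs_sub_le_one : ∀ x y, |F x - F y| ≤ 1

theorem exists_isCutFunction [ChartedSpace ℝ Q] [T2Space Q] [PreconnectedSpace Q]
    (hQ : HasCircleLifts Q) (q : Q) : ∃ F V, IsCutFunction F V ∧ q ∈ V := by
  let E := chartAt ℝ q
  have hq : q ∈ E.source := mem_chart_source ℝ q
  obtain ⟨δ, hδ, hball⟩ := Metric.nhds_basis_closedBall.mem_iff.1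
    (E.open_target.mem_nhds (E.map_source hq))
  rw [Real.closedBall_eq_Icc] at hball
  obtain ⟨r, hr, hrδ⟩ := exists_between (lt_min hδ (half_pos one_pos))
  obtain ⟨hrδ, hr_half⟩ := lt_min_iff.1 hrδ
  have hIcc : Icc (E q - r) (E q + r) ⊆ E.target :=
    (Icc_subset_Icc (by linarith) (by linarith)).trans hball
  obtain ⟨F, hF⟩ := exists_isArcCollapse hQ E (by linarith) hIcc
  refine ⟨F, E.symm '' Ioo (E q - r) (E q + r), ?_, E q, ⟨by linarith, by linarith⟩, E.left_inv hq⟩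
  exact
    { isOpen := E.symm.isOpen_image_of_subset_source isOpen_Ioo (Ioo_subset_Icc_self.trans hIcc)
      continuous := hF.continuous
      isPreconnected_lt := hF.isPreconnected_lt
      isPreconnected_gt := hF.isPreconnected_gt
      eq_of_apply_eq := fun x hx y hxy => hF.eq_of_apply_eq hx hxy
      abs_sub_le_one := fun x y => (abs_sub_le_of_le_of_le (hF.mem_Icc x).1 (hF.mem_Icc x).2
        (hF.mem_Icc y).1 (hF.mem_Icc y).2).trans (by linarith) }

/-- Otherwise `p` and `y` would lie on the same side of the level `F x`, a connected set missing
`x`, whereas `x` separates them. -/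
theorem IsCutFunction.mem_uIcc {F G : Q → ℝ} {V W : Set Q} (hF : IsCutFunction F V)
    (hG : IsCutFunction G W) {p x y : Q} (hx : x ∈ W) (hxG : G x ∈ uIcc (G p) (G y)) :
    F x ∈ uIcc (F p) (F y) := by
  have hmem : ∀ A : Set Q, IsPreconnected A → p ∈ A → y ∈ A → x ∈ A := by
    intro A hA hp hy
    obtain ⟨z, hz, hzx⟩ := (hA.image G hG.continuous.continuousOn).ordConnected.uIcc_subset
      (mem_image_of_mem G hp) (mem_image_of_mem G hy) hxG
    exact hG.eq_of_apply_eq x hx z hzx ▸ hz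
  refine ⟨not_lt.1 fun hlt => ?_, not_lt.1 fun hlt => ?_⟩
  · obtain ⟨hp, hy⟩ := lt_inf_iff.1 hlt
    exact lt_irrefl (F x) (hmem {z | F x < F z} (hF.isPreconnected_gt (F x)) hp hy)
  · obtain ⟨hp, hy⟩ := sup_lt_iff.1 hlt
    exact lt_irrefl (F x) (hmem {z | F z < F x} (hF.isPreconnected_lt (F x)) hp hy)

variable {F : ℕ → Q → ℝ} {V : ℕ → Set Q}

theorem weighted_abs_sub_le (h : ∀ n, IsCutFunction (F n) (V n)) (p x : Q) (n : ℕ) :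
    (1 / 2) ^ n * |F n x - F n p| ≤ (1 / 2) ^ n :=
  mul_le_of_le_one_right (by positivity) ((h n).abs_sub_le_one x p)

theorem summable_weighted_abs_sub (h : ∀ n, IsCutFunction (F n) (V n)) (p x : Q) :
    Summable fun n => (1 / 2) ^ n * |F n x - F n p| :=
  summable_geometric_two.of_nonneg_of_le (fun _ => by positivity) (weighted_abs_sub_le h p x)

theorem continuous_cutDist (h : ∀ n, IsCutFunction (F n) (V n)) (p : Q) :
    Continuous (cutDist F p) := by
  refine continuous_tsum (fun n => ?_) summable_geometric_two fun n x => ?_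
  · exact continuous_const.mul (((h n).continuous.sub continuous_const).abs)
  · rw [Real.norm_of_nonneg (by positivity)]
    exact weighted_abs_sub_le h p x n

theorem cutDist_lt_cutDist (h : ∀ n, IsCutFunction (F n) (V n)) {m : ℕ} {p x y : Q}
    (hx : x ∈ V m) (hxF : F m x ∈ uIcc (F m p) (F m y)) (hxy : x ≠ y) :
    cutDist F p x < cutDist F p y := by
  have hle : ∀ n, |F n x - F n p| ≤ |F n y - F n p| := fun n =>
    abs_sub_left_of_mem_uIcc ((h n).mem_uIcc (h m) hx hxF)
  have hne : F m x ≠ F m y := fun heq => hxy ((h m).eq_of_apply_eq x hx y heq.symm).symm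
  have hlt : |F m x - F m p| < |F m y - F m p| := by
    rcases mem_uIcc.1 hxF with ⟨hpx, hxy⟩ | ⟨hyx, hxp⟩
    · rw [abs_of_nonneg (by linarith), abs_of_nonneg (by linarith)]
      exact sub_lt_sub_right (hxy.lt_of_ne hne) _
    · rw [abs_of_nonpos (by linarith), abs_of_nonpos (by linarith)]
      exact neg_lt_neg (sub_lt_sub_right (hyx.lt_of_ne hne.symm) _)
  exact Summable.tsum_lt_tsum (fun n => mul_le_mul_of_nonneg_left (hle n) (by positivity))
    (mul_lt_mul_of_pos_left hlt (by positivity)) (summable_weighted_abs_sub h p x)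
    (summable_weighted_abs_sub h p y)

theorem injOn_cutDist_of_ge (h : ∀ n, IsCutFunction (F n) (V n)) (m : ℕ) (p : Q) :
    InjOn (cutDist F p) (V m ∩ {x | F m p ≤ F m x}) := by
  intro x hx y hy hxy
  by_contra hne
  rcases le_total (F m x) (F m y) with hle | hle
  · exact (cutDist_lt_cutDist h hx.1 (Icc_subset_uIcc ⟨hx.2, hle⟩) hne).ne hxy
  · exact (cutDist_lt_cutDist h hy.1 (Icc_subset_uIcc ⟨hy.2, hle⟩) (Ne.symm hne)).ne' hxy

theorem injOn_cutDist_of_le (h : ∀ n, IsCutFunction (F n) (V n)) (m : ℕ) (p : Q) :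
    InjOn (cutDist F p) (V m ∩ {x | F m x ≤ F m p}) := by
  intro x hx y hy hxy
  by_contra hne
  rcases le_total (F m x) (F m y) with hle | hle
  · exact (cutDist_lt_cutDist h hy.1 (Icc_subset_uIcc' ⟨hle, hy.2⟩) (Ne.symm hne)).ne' hxy
  · exact (cutDist_lt_cutDist h hx.1 (Icc_subset_uIcc' ⟨hle, hx.2⟩) hne).ne hxy

theorem continuous_signedCutDist (h : ∀ n, IsCutFunction (F n) (V n)) {k : ℕ} {p : Q}
    (hp : p ∈ V k) : Continuous (signedCutDist F k p) := by
  refine (continuous_cutDist h p).if_le (continuous_cutDist h p).neg continuous_const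
    (h k).continuous fun x hx => ?_
  rw [(h k).eq_of_apply_eq p hp x hx.symm, cutDist_self, neg_zero]

theorem injOn_signedCutDist (h : ∀ n, IsCutFunction (F n) (V n)) {k : ℕ} {p : Q}
    (hp : p ∈ V k) : InjOn (signedCutDist F k p) (V k) := by
  have hcross : ∀ x y, F k p ≤ F k x → F k y < F k p →
      signedCutDist F k p x ≠ signedCutDist F k p y := by
    intro x y hx hy hxy
    rw [signedCutDist, signedCutDist, if_pos hx, if_neg hy.not_ge] at hxy
    have hpos : cutDist F p p < cutDist F p y :=
      cutDist_lt_cutDist h hp left_mem_uIcc fun hpy => hy.ne (congrArg (F k) hpy.symm)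
    linarith [cutDist_self F p, cutDist_nonneg F p x]
  intro x hx y hy hxy
  have hD : cutDist F p x = cutDist F p y := by
    rw [← abs_signedCutDist F k, hxy, abs_signedCutDist]
  rcases le_or_gt (F k p) (F k x) with hpx | hxp <;> rcases le_or_gt (F k p) (F k y) with hpy | hyp
  · exact injOn_cutDist_of_ge h k p ⟨hx, hpx⟩ ⟨hy, hpy⟩ hD
  · exact absurd hxy (hcross x y hpx hyp)
  · exact absurd hxy.symm (hcross y x hpy hxp)
  · exact injOn_cutDist_of_le h k p ⟨hx, hxp.le⟩ ⟨hy, hyp.le⟩ hD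

theorem exists_isOpen_injOn_cutDist (h : ∀ n, IsCutFunction (F n) (V n)) {m : ℕ} {p x : Q}
    (hx : x ∈ V m) (hxp : x ≠ p) : ∃ U, IsOpen U ∧ x ∈ U ∧ InjOn (cutDist F p) U := by
  have hne : F m x ≠ F m p := fun heq => hxp ((h m).eq_of_apply_eq x hx p heq.symm).symm
  rcases hne.lt_or_gt with hlt | hgt
  · exact ⟨V m ∩ {y | F m y < F m p},
      (h m).isOpen.inter (isOpen_lt (h m).continuous continuous_const), ⟨hx, hlt⟩,
      (injOn_cutDist_of_le h m p).mono
        (inter_subset_inter_right _ (ofPred_subset_ofPred.2 fun _ => le_of_lt))⟩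
  · exact ⟨V m ∩ {y | F m p < F m y},
      (h m).isOpen.inter (isOpen_lt continuous_const (h m).continuous), ⟨hx, hgt⟩,
      (injOn_cutDist_of_ge h m p).mono
        (inter_subset_inter_right _ (ofPred_subset_ofPred.2 fun _ => le_of_lt))⟩

theorem isLocallyInjective_signedCutDist (h : ∀ n, IsCutFunction (F n) (V n))
    (hcover : ∀ x, ∃ n, x ∈ V n) {k : ℕ} {p : Q} (hp : p ∈ V k) :
    IsLocallyInjective (signedCutDist F k p) := by
  intro x
  by_cases hxp : x = p
  · exact ⟨V k, (h k).isOpen, hxp ▸ hp, injOn_signedCutDist h hp⟩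
  · obtain ⟨m, hm⟩ := hcover x
    obtain ⟨U, hU, hxU, hinj⟩ := exists_isOpen_injOn_cutDist h hm hxp
    refine ⟨U, hU, hxU, fun y hy z hz hyz => hinj hy hz ?_⟩
    rw [← abs_signedCutDist F k, hyz, abs_signedCutDist]

theorem nonempty_homeomorph_real_of_hasCircleLifts [ChartedSpace ℝ Q] [T2Space Q]
    [ConnectedSpace Q] [LindelofSpace Q] (hQ : HasCircleLifts Q) : Nonempty (Q ≃ₜ ℝ) := by
  choose F V hFV hV using fun q : Q => exists_isCutFunction hQ q
  obtain ⟨r, hr⟩ := isLindelof_univ.indexed_countable_subcover V (fun q => (hFV q).isOpen)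
    fun q _ => mem_iUnion.2 ⟨q, hV q⟩
  have hcover : ∀ x, ∃ n, x ∈ V (r n) := fun x => mem_iUnion.1 (hr (mem_univ x))
  have hcut : ∀ n, IsCutFunction (F (r n)) (V (r n)) := fun n => hFV (r n)
  let p : Q := Classical.arbitrary Q
  obtain ⟨k, hk⟩ := hcover p
  have hlocal := isLocalHomeomorph_of_isLocallyInjective (continuous_signedCutDist hcut hk)
    (isLocallyInjective_signedCutDist hcut hcover hk)
  exact nonempty_homeomorph_real_of_isOpenEmbedding
    (hlocal.isOpenEmbedding_of_injective (injective_of_isLocalHomeomorph_real hlocal))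

end CutFunction

section LeafSpace

theorem nonempty_chartedSpace_of_forall_exists_mem_source {H X : Type*} [TopologicalSpace H]
    [TopologicalSpace X] (h : ∀ x : X, ∃ e : OpenPartialHomeomorph X H, x ∈ e.source) :
    Nonempty (ChartedSpace H X) := by
  choose e he using h
  exact ⟨{ atlas := univ, chartAt := e, mem_chart_source := he,
           chart_mem_atlas := fun _ => mem_univ _ }⟩

theorem isClosed_setOf_exists_mem_tendsto {ι α X : Type*} [UniformSpace α] [UniformSpace X]
    [CompleteSpace X] {f : ι → α → X} (hf : UniformEquicontinuous f) (l : Filter ι) [l.NeBot]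
    {C : Set X} (hC : IsClosed C) : IsClosed {s | ∃ p ∈ C, Tendsto (f · s) l (𝓝 p)} := by
  set S := {s | ∃ p ∈ C, Tendsto (f · s) l (𝓝 p)}
  refine isClosed_of_closure_subset fun s hs => ?_
  have : (𝓝[S] s).NeBot := mem_closure_iff_nhdsWithin_neBot.1 hs
  obtain ⟨_, x₀, -, -⟩ := closure_nonempty_iff.1 ⟨s, hs⟩
  have : Nonempty X := ⟨x₀⟩
  choose! p hpC hp using fun t (ht : t ∈ S) => ht
  have hunif : UniformContinuousOn p S :=
    Tendsto.uniformContinuousOn_of_uniformEquicontinuousOn hp (hf.uniformEquicontinuousOn S)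
  obtain ⟨z, hz⟩ := CompleteSpace.complete
    ((cauchy_nhds.mono nhdsWithin_le_nhds).map_of_le hunif
      (le_principal_iff.2 (self_mem_nhdsWithin (a := s))))
  exact ⟨z, hC.mem_of_tendsto hz (eventually_mem_nhdsWithin.mono hpC),
    (hf.equicontinuous s).tendsto_of_mem_closure hz hp hs⟩

theorem hasCircleLifts_of_isQuotientMap {M Q : Type*} [TopologicalSpace M] [TopologicalSpace Q]
    [SimplyConnectedSpace M] [LocallyPathConnectedSpace M] {p : C(M, Q)}
    (hp : Topology.IsQuotientMap p) (hfib : ∀ q, IsPreconnected (p ⁻¹' {q})) :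
    HasCircleLifts Q := by
  intro T f
  have hcov := AddCircle.isCoveringMap_coe T
  let x₀ : M := Classical.arbitrary M
  obtain ⟨e₀, he₀⟩ := QuotientAddGroup.mk_surjective (f (p x₀))
  obtain ⟨F, ⟨-, hF⟩, -⟩ := hcov.existsUnique_continuousMap_lifts (f.comp p) x₀ e₀ he₀
  have hFf : ∀ x, (F x : AddCircle T) = f (p x) := congrFun hF
  have hconst : Function.FactorsThrough F p := fun x y hxy =>
    hcov.constOn_of_comp (hfib (p y)) F.continuous.continuousOn
      (fun a ha b hb => by rw [hFf, hFf, show p a = p y from ha, show p b = p y from hb]) hxy rfl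
  refine ⟨hp.lift F hconst, fun q => ?_⟩
  obtain ⟨x, rfl⟩ := hp.surjective q
  rw [← hFf, ← ContinuousMap.comp_apply, hp.lift_comp]

theorem apply_mem_ball_of_dist_add_dist_lt {X Y : Type*} [PseudoMetricSpace X]
    [PseudoMetricSpace Y] {g : X → Y} (hg : Isometry g) {s t : X} {p : Y} {ε : ℝ}
    (hst : dist (g s) p + dist t s < ε) : g t ∈ ball p ε := by
  rw [← hg.dist_eq, add_comm] at hst
  exact (dist_triangle _ _ _).trans_lt hst

/-- A foliated chart with leaf coordinate in `ℝ` and transversal coordinate in `T`: its image is all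
of `ℝ × T` and each of its plaques `Φ.symm '' (ℝ × {c})` lies in a class of the leaf
relation `r`. -/
structure IsFoliatedChart {M T : Type*} [TopologicalSpace M] [TopologicalSpace T] (r : M → M → Prop)
    (Φ : OpenPartialHomeomorph M (ℝ × T)) : Prop where
  target_eq : Φ.target = univ
  rel_symm : ∀ c s t, r (Φ.symm (s, c)) (Φ.symm (t, c))

namespace IsFoliatedChart

variable {M T : Type*} [TopologicalSpace M] [TopologicalSpace T] {r : M → M → Prop}
  {Φ : OpenPartialHomeomorph M (ℝ × T)}

theorem mem_target (hΦ : IsFoliatedChart r Φ) (z : ℝ × T) : z ∈ Φ.target :=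
  hΦ.target_eq ▸ mem_univ z

theorem continuous_symm (hΦ : IsFoliatedChart r Φ) : Continuous Φ.symm :=
  continuousOn_univ.1 (hΦ.target_eq ▸ Φ.continuousOn_symm)

theorem rel_symm_apply (hΦ : IsFoliatedChart r Φ) {x : M} (hx : x ∈ Φ.source) (s : ℝ) :
    r (Φ.symm (s, (Φ x).2)) x := by
  simpa only [Prod.mk.eta, Φ.left_inv hx] using hΦ.rel_symm (Φ x).2 s (Φ x).1

theorem mem_nhds_of_snd_eq (hΦ : IsFoliatedChart r Φ) {S : Set M}
    (hS : ∀ x y, r x y → x ∈ S → y ∈ S) {x y : M} (hx : x ∈ Φ.source) (hy : y ∈ Φ.source)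
    (hxy : (Φ x).2 = (Φ y).2) (hSx : S ∈ 𝓝 x) : S ∈ 𝓝 y := by
  have hg : ContinuousAt (fun z => Φ.symm ((Φ x).1, (Φ z).2)) y :=
    hΦ.continuous_symm.continuousAt.comp (continuousAt_const.prodMk (Φ.continuousAt hy).snd)
  have hgy : Φ.symm ((Φ x).1, (Φ y).2) = x := by rw [← hxy, Prod.mk.eta, Φ.left_inv hx]
  filter_upwards [hg.preimage_mem_nhds (by rwa [hgy]), Φ.open_source.mem_nhds hy] with z hz hzs
  exact hS _ _ (hΦ.rel_symm_apply hzs _) hz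

end IsFoliatedChart

variable {M T : Type*} [MetricSpace M] [TopologicalSpace T] {r : M → M → Prop} {γ : M → ℝ → M}

/-- A foliation of `M` by lines with transversals modelled on `T`: `r` is the relation of lying on
the same leaf and `γ x` is a unit speed parametrization, starting at `x`, of the leaf of `x`. -/
structure IsLineFoliation (T : Type*) [TopologicalSpace T] (r : M → M → Prop) (γ : M → ℝ → M) :
    Prop where
  equivalence : Equivalence r
  isometry : ∀ x, Isometry (γ x)
  apply_zero : ∀ x, γ x 0 = x
  rel_iff : ∀ x y, r x y ↔ y ∈ range (γ x)
  exists_chart : ∀ x, ∃ Φ : OpenPartialHomeomorph M (ℝ × T), x ∈ Φ.source ∧ IsFoliatedChart r Φ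

namespace IsLineFoliation

variable {Φ : OpenPartialHomeomorph M (ℝ × T)}

theorem rel_apply (h : IsLineFoliation T r γ) (x : M) (s : ℝ) : r x (γ x s) :=
  (h.rel_iff x _).2 ⟨s, rfl⟩

theorem eventually_snd_eq (h : IsLineFoliation T r γ) (hΦ : IsFoliatedChart r Φ) {x : M} {s : ℝ}
    (hs : γ x s ∈ Φ.source) :
    ∀ᶠ t in 𝓝 s, γ x t ∈ Φ.source ∧ (Φ (γ x t)).2 = (Φ (γ x s)).2 := by
  set c := (Φ (γ x s)).2 with hc
  have hplaque : ∀ u, ∃ t, γ x t = Φ.symm (u, c) := fun u => (h.rel_iff x _).1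
    (h.equivalence.trans (h.rel_apply x s) (h.equivalence.symm (hΦ.rel_symm_apply hs u)))
  choose σ hσ using hplaque
  have hcont : Continuous σ := by
    rw [(h.isometry x).isEmbedding.continuous_iff, show γ x ∘ σ = fun u => Φ.symm (u, c) from
      funext hσ]
    exact hΦ.continuous_symm.comp (by fun_prop)
  have hinj : Function.Injective σ := fun u v huv =>
    congrArg Prod.fst (Φ.symm.injOn (hΦ.mem_target (u, c)) (hΦ.mem_target (v, c))
      (by rw [← hσ, ← hσ, huv]))
  have hs' : σ (Φ (γ x s)).1 = s := (h.isometry x).injective <| by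
    rw [hσ, hc, Prod.mk.eta, Φ.left_inv hs]
  filter_upwards [(isOpen_image_of_continuousOn_of_injOn isOpen_univ hcont.continuousOn
    hinj.injOn).mem_nhds ⟨_, mem_univ _, hs'⟩]
  rintro _ ⟨u, -, rfl⟩
  rw [hσ, Φ.right_inv (hΦ.mem_target _)]
  exact ⟨Φ.map_target (hΦ.mem_target _), rfl⟩

theorem snd_eq_of_isPreconnected (h : IsLineFoliation T r γ) (hΦ : IsFoliatedChart r Φ) {x : M}
    {A : Set ℝ} (hA : IsPreconnected A) (hAs : ∀ s ∈ A, γ x s ∈ Φ.source) {s t : ℝ} (hs : s ∈ A)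
    (ht : t ∈ A) : (Φ (γ x s)).2 = (Φ (γ x t)).2 := by
  have : PreconnectedSpace A := isPreconnected_iff_preconnectedSpace.1 hA
  have hlocal : IsLocallyConstant fun u : A => (Φ (γ x u)).2 :=
    (IsLocallyConstant.iff_eventually_eq _).2 fun u => (continuous_subtype_val.tendsto u).eventually
      ((h.eventually_snd_eq hΦ (hAs u u.2)).mono fun _ => And.right)
  exact hlocal.apply_eq_of_preconnectedSpace ⟨s, hs⟩ ⟨t, ht⟩

theorem snd_eq_of_dist_add_lt (h : IsLineFoliation T r γ) (hΦ : IsFoliatedChart r Φ) {x p : M}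
    {s t ε : ℝ} (hball : ball p ε ⊆ Φ.source) (hst : dist (γ x s) p + dist t s < ε) :
    (Φ (γ x s)).2 = (Φ (γ x t)).2 := by
  refine h.snd_eq_of_isPreconnected hΦ isPreconnected_uIcc (fun u hu => ?_) left_mem_uIcc
    right_mem_uIcc
  have hdist : dist u s ≤ dist t s := abs_sub_left_of_mem_uIcc hu
  exact hball (apply_mem_ball_of_dist_add_dist_lt (h.isometry x) (by linarith))

/-- A leaf returning near `x` would, being minimizing, stay in the chart on the way. -/
theorem exists_nhds_forall_rel_snd_eq (h : IsLineFoliation T r γ) (hΦ : IsFoliatedChart r Φ) {x : M}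
    (hx : x ∈ Φ.source) : ∃ N ∈ 𝓝 x, ∀ y ∈ N, ∀ z ∈ N, r y z → (Φ y).2 = (Φ z).2 := by
  obtain ⟨ε, hε, hball⟩ := Metric.isOpen_iff.1 Φ.open_source x hx
  refine ⟨ball x (ε / 3), ball_mem_nhds x (by linarith), fun y hy z hz hyz => ?_⟩
  obtain ⟨s, rfl⟩ := (h.rel_iff y z).1 hyz
  have hs : dist s 0 = dist (γ y s) y := by rw [← (h.isometry y).dist_eq, h.apply_zero]
  have htri := dist_triangle_right (γ y s) y x
  rw [mem_ball] at hy hz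
  have heq := h.snd_eq_of_dist_add_lt hΦ (x := y) (s := 0) (t := s) hball
    (by rw [h.apply_zero]; linarith)
  rwa [h.apply_zero] at heq

theorem mem_nhds_of_rel (h : IsLineFoliation T r γ) {S : Set M}
    (hS : ∀ x y, r x y → x ∈ S → y ∈ S) {x y : M} (hxy : r x y) (hSx : S ∈ 𝓝 x) : S ∈ 𝓝 y := by
  obtain ⟨t, rfl⟩ := (h.rel_iff x y).1 hxy
  have hlocal : IsLocallyConstant fun s => S ∈ 𝓝 (γ x s) := by
    refine (IsLocallyConstant.iff_eventually_eq _).2 fun s => ?_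
    obtain ⟨Φ, hs, hΦ⟩ := h.exists_chart (γ x s)
    filter_upwards [h.eventually_snd_eq hΦ hs] with u ⟨hu, hus⟩
    exact propext ⟨hΦ.mem_nhds_of_snd_eq hS hu hs hus, hΦ.mem_nhds_of_snd_eq hS hs hu hus.symm⟩
  rw [← h.apply_zero x] at hSx
  exact (hlocal.apply_eq_of_preconnectedSpace 0 t).mp hSx

theorem isOpenQuotientMap_mk (h : IsLineFoliation T r γ) : IsOpenQuotientMap (Quot.mk r) := by
  refine ⟨Quot.mk_surjective, continuous_quot_mk, fun O hO => ?_⟩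
  rw [← isQuotientMap_quot_mk.isOpen_preimage, isOpen_iff_mem_nhds]
  rintro y ⟨x, hx, hxy⟩
  refine h.mem_nhds_of_rel (fun u v huv hu => ?_) ((h.equivalence.quot_mk_eq_iff x y).1 hxy)
    (mem_of_superset (hO.mem_nhds hx) (subset_preimage_image _ O))
  rwa [mem_preimage, ← Quot.sound huv]

theorem exists_openPartialHomeomorph_quot (h : IsLineFoliation T r γ) (q : Quot r) :
    ∃ E : OpenPartialHomeomorph (Quot r) T, q ∈ E.source := by
  obtain ⟨x, rfl⟩ := Quot.mk_surjective q
  obtain ⟨Φ, hx, hΦ⟩ := h.exists_chart x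
  obtain ⟨N, hN, hNeq⟩ := h.exists_nhds_forall_rel_snd_eq hΦ hx
  let τ : T → M := fun c => Φ.symm ((Φ x).1, c)
  have hτ : Continuous τ := hΦ.continuous_symm.comp (by fun_prop)
  have hτx : τ (Φ x).2 = x := Φ.left_inv hx
  have hopen : IsOpenMap (Quot.mk r ∘ τ) := by
    intro O hO
    have himage : Quot.mk r ∘ τ '' O = Quot.mk r '' (Φ.symm '' (univ ×ˢ O)) := by
      refine Subset.antisymm ?_ ?_
      · rintro _ ⟨c, hc, rfl⟩
        exact mem_image_of_mem _ ⟨_, ⟨mem_univ _, hc⟩, rfl⟩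
      · rintro _ ⟨_, ⟨⟨s, c⟩, ⟨-, hc⟩, rfl⟩, rfl⟩
        exact ⟨c, hc, Quot.sound (hΦ.rel_symm c _ s)⟩
    rw [himage]
    exact h.isOpenQuotientMap_mk.isOpenMap _ (Φ.symm.isOpen_image_of_subset_source
      (isOpen_univ.prod hO) fun z _ => hΦ.mem_target z)
  have hinj : InjOn (Quot.mk r ∘ τ) (τ ⁻¹' interior N) := by
    intro c hc d hd hcd
    have hsnd := hNeq _ (interior_subset hc) _ (interior_subset hd)
      ((h.equivalence.quot_mk_eq_iff _ _).1 hcd)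
    rwa [Φ.right_inv (hΦ.mem_target _), Φ.right_inv (hΦ.mem_target _)] at hsnd
  have hmem : (Φ x).2 ∈ τ ⁻¹' interior N := by
    rw [mem_preimage, hτx]
    exact mem_interior_iff_mem_nhds.2 hN
  obtain ⟨e, hsource, he⟩ := exists_openPartialHomeomorph_of_injOn (continuous_quot_mk.comp hτ)
    hopen (isOpen_interior.preimage hτ) ⟨_, hmem⟩ hinj
  refine ⟨e.symm, ?_⟩
  have hex : e (Φ x).2 = Quot.mk r x := by rw [he, Function.comp_apply, hτx]
  exact hex ▸ e.map_source (hsource ▸ hmem)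

theorem exists_tendsto_nhds [LocallyCompactSpace M] (h : IsLineFoliation T r γ) {u : Ultrafilter M}
    {s : ℝ} {p : M} (hp : Tendsto (γ · s) u (𝓝 p)) :
    ∀ᶠ t in 𝓝 s, ∃ q, r p q ∧ Tendsto (γ · t) u (𝓝 q) := by
  obtain ⟨Φ, hpΦ, hΦ⟩ := h.exists_chart p
  obtain ⟨K, hK, hKΦ, hKc⟩ := local_compact_nhds (Φ.open_source.mem_nhds hpΦ)
  obtain ⟨ε, hε, hball⟩ := Metric.mem_nhds_iff.1 hK
  filter_upwards [ball_mem_nhds s (half_pos hε)] with t ht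
  have hnear : ∀ᶠ w in (u : Filter M), dist (γ w s) p + dist t s < ε := by
    filter_upwards [hp (ball_mem_nhds p (half_pos hε))] with w hw
    rw [mem_preimage, mem_ball] at hw
    rw [mem_ball] at ht
    linarith
  obtain ⟨q, hqK, hq⟩ : ∃ q ∈ K, Tendsto (γ · t) u (𝓝 q) :=
    hKc.ultrafilter_le_nhds (u.map (γ · t)) (le_principal_iff.2
      (hnear.mono fun w hw => hball (apply_mem_ball_of_dist_add_dist_lt (h.isometry w) hw)))
  have hΦq := (Φ.continuousAt (hKΦ hqK)).tendsto.comp hq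
  have hΦp := (Φ.continuousAt hpΦ).tendsto.comp hp
  have hq' : Tendsto (γ · t) u (𝓝 (Φ.symm ((Φ q).1, (Φ p).2))) := by
    refine ((hΦ.continuous_symm.tendsto _).comp (hΦq.fst_nhds.prodMk_nhds hΦp.snd_nhds)).congr' ?_
    filter_upwards [hnear] with w hw
    have hwt : γ w t ∈ Φ.source :=
      hKΦ (hball (apply_mem_ball_of_dist_add_dist_lt (h.isometry w) hw))
    simp only [Function.comp_apply, h.snd_eq_of_dist_add_lt hΦ (hball.trans hKΦ) hw, Prod.mk.eta,
      Φ.left_inv hwt]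
  exact ⟨_, h.equivalence.symm (hΦ.rel_symm_apply hpΦ _), hq'⟩

theorem exists_rel_tendsto [CompleteSpace M] [LocallyCompactSpace M] (h : IsLineFoliation T r γ)
    {x : M} {u : Ultrafilter M} (hu : (u : Filter M) ≤ 𝓝 x) (s : ℝ) :
    ∃ p, r x p ∧ Tendsto (γ · s) u (𝓝 p) := by
  have hclosed : IsClosed {s | ∃ p ∈ range (γ x), Tendsto (γ · s) u (𝓝 p)} :=
    isClosed_setOf_exists_mem_tendsto (LipschitzWith.uniformEquicontinuous γ 1 fun w =>
      (h.isometry w).lipschitz) u (h.isometry x).isClosedEmbedding.isClosed_range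
  simp only [← h.rel_iff] at hclosed
  have hopen : IsOpen {s | ∃ p, r x p ∧ Tendsto (γ · s) u (𝓝 p)} := by
    refine isOpen_iff_mem_nhds.2 fun t ⟨p, hxp, hp⟩ => ?_
    filter_upwards [h.exists_tendsto_nhds hp] with t' ⟨q, hpq, hq⟩
    exact ⟨q, h.equivalence.trans hxp hpq, hq⟩
  have hzero : ∃ p, r x p ∧ Tendsto (γ · 0) u (𝓝 p) :=
    ⟨x, h.equivalence.refl x, (tendsto_congr h.apply_zero).2 hu⟩
  exact (IsClopen.eq_univ ⟨hclosed, hopen⟩ ⟨0, hzero⟩).ge (mem_univ s)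

theorem isClosed_rel [CompleteSpace M] [LocallyCompactSpace M] (h : IsLineFoliation T r γ) :
    IsClosed {z : M × M | r z.1 z.2} := by
  rw [isClosed_iff_ultrafilter]
  rintro ⟨x, y⟩ u hu hrel
  have hx := (continuous_fst.tendsto (x, y)).mono_left hu
  have hy := (continuous_snd.tendsto (x, y)).mono_left hu
  let σ : M × M → ℝ := fun z => Function.invFun (γ z.1) z.2
  have hσ : ∀ᶠ z in (u : Filter (M × M)), γ z.1 (σ z) = z.2 :=
    Eventually.mono hrel fun z hz => Function.invFun_eq ((h.rel_iff _ _).1 hz)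
  have hbound : ∀ᶠ z in (u : Filter (M × M)), σ z ∈ closedBall 0 (dist x y + 1) := by
    filter_upwards [hσ, (hx.dist hy).eventually_lt_const (lt_add_one _)] with z hz hlt
    rw [mem_closedBall, ← (h.isometry z.1).dist_eq, hz, h.apply_zero, dist_comm]
    exact hlt.le
  obtain ⟨s, -, hs⟩ : ∃ s ∈ closedBall (0 : ℝ) (dist x y + 1), Tendsto σ u (𝓝 s) :=
    (isCompact_closedBall _ _).ultrafilter_le_nhds (u.map σ) (le_principal_iff.2 hbound)
  obtain ⟨p, hxp, hp⟩ := h.exists_rel_tendsto (u := u.map Prod.fst) hx s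
  have hyp : Tendsto Prod.snd (u : Filter (M × M)) (𝓝 p) := by
    refine Tendsto.congr_dist (f₁ := fun z : M × M => γ z.1 s) hp ?_
    refine (tendsto_iff_dist_tendsto_zero.1 hs).congr' ?_
    filter_upwards [hσ] with z hz
    rw [← (h.isometry z.1).dist_eq, hz, dist_comm]
  have hpy : p = y := tendsto_nhds_unique hyp hy
  exact hpy ▸ hxp

theorem t2Space_quot [CompleteSpace M] [LocallyCompactSpace M] (h : IsLineFoliation T r γ) :
    T2Space (Quot r) := by
  rw [t2Space_iff_of_isOpenQuotientMap h.isOpenQuotientMap_mk]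
  simpa only [h.equivalence.quot_mk_eq_iff] using h.isClosed_rel

theorem hasCircleLifts_quot [SimplyConnectedSpace M] [LocallyPathConnectedSpace M]
    (h : IsLineFoliation T r γ) : HasCircleLifts (Quot r) := by
  refine hasCircleLifts_of_isQuotientMap (p := ⟨Quot.mk r, continuous_quot_mk⟩)
    isQuotientMap_quot_mk fun q => ?_
  obtain ⟨x, rfl⟩ := Quot.mk_surjective q
  have hfibre : Quot.mk r ⁻¹' {Quot.mk r x} = range (γ x) := by
    ext y
    rw [mem_preimage, mem_singleton_iff, eq_comm, h.equivalence.quot_mk_eq_iff, h.rel_iff]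
  exact hfibre ▸ isPreconnected_range (h.isometry x).continuous

end IsLineFoliation

theorem leaf_space_hausdorff_and_homeomorphic_real_line_general [CompleteSpace M]
    [SimplyConnectedSpace M] [LindelofSpace M] (h : IsLineFoliation ℝ r γ) :
    T2Space (Quot r) ∧ Nonempty (Quot r ≃ₜ ℝ) := by
  obtain ⟨_⟩ := nonempty_chartedSpace_of_forall_exists_mem_source fun x =>
    (h.exists_chart x).imp fun _ => And.left
  have : LocallyCompactSpace M := ChartedSpace.locallyCompactSpace (ℝ × ℝ) M
  have : LocallyPathConnectedSpace M := ChartedSpace.locallyPathConnectedSpace (ℝ × ℝ) M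
  obtain ⟨_⟩ := nonempty_chartedSpace_of_forall_exists_mem_source
    h.exists_openPartialHomeomorph_quot
  have : ConnectedSpace (Quot r) := Quot.mk_surjective.connectedSpace continuous_quot_mk
  have hT2 := h.t2Space_quot
  exact ⟨hT2, nonempty_homeomorph_real_of_hasCircleLifts h.hasCircleLifts_quot⟩

end LeafSpace

namespace GeodesicLineFoliation

variable {S : RiemannianSurface} (F : GeodesicLineFoliation S)

/-- The leaf relation of `F`, whose quotient is the leaf space `M/F`. -/
def SameLeaf (x y : S.M) : Prop := ∃ L ∈ F.leaves, x ∈ L ∧ y ∈ L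

theorem equivalence_sameLeaf : Equivalence F.SameLeaf where
  refl x := (F.covers x).imp fun _ ⟨hL, hx⟩ => ⟨hL, hx, hx⟩
  symm := fun ⟨L, hL, hx, hy⟩ => ⟨L, hL, hy, hx⟩
  trans := by
    rintro x y z ⟨L, hL, hx, hy⟩ ⟨L', hL', hy', hz⟩
    obtain rfl := F.eq_of_inter L hL L' hL' ⟨y, hy, hy'⟩
    exact ⟨L, hL, hx, hz⟩

theorem sameLeaf_iff_of_mem_leaves {L : Set S.M} (hL : L ∈ F.leaves) {x : S.M} (hx : x ∈ L)
    (y : S.M) : F.SameLeaf x y ↔ y ∈ L := by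
  refine ⟨?_, fun hy => ⟨L, hL, hx, hy⟩⟩
  rintro ⟨L', hL', hx', hy⟩
  rwa [F.eq_of_inter L hL L' hL' ⟨x, hx, hx'⟩]

theorem exists_isometry_range_mem_leaves (x : S.M) :
    ∃ g : ℝ → S.M, Isometry g ∧ g 0 = x ∧ range g ∈ F.leaves := by
  obtain ⟨L, hL, hx⟩ := F.covers x
  obtain ⟨g, hg, -, rfl⟩ := F.leaf_is_geodesic_line L hL
  obtain ⟨s, rfl⟩ := hx
  refine ⟨g ∘ (s + ·), (Isometry.of_dist_eq hg).comp (isometry_add_left s), ?_, ?_⟩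
  · rw [Function.comp_apply, add_zero]
  · rwa [(add_left_surjective s).range_comp]

theorem exists_isFoliatedChart (x : S.M) :
    ∃ Φ : OpenPartialHomeomorph S.M (ℝ × ℝ), x ∈ Φ.source ∧ IsFoliatedChart F.SameLeaf Φ := by
  obtain ⟨U, hU, hx, φ, hφ⟩ := F.locally_trivial x
  have hemb : Topology.IsOpenEmbedding (Subtype.val ∘ φ.symm) :=
    hU.isOpenEmbedding_subtypeVal.comp φ.symm.isOpenEmbedding
  refine ⟨(hemb.toOpenPartialHomeomorph _).symm, ?_, ?_, fun c s t => ?_⟩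
  · rw [OpenPartialHomeomorph.symm_source, hemb.toOpenPartialHomeomorph_target]
    exact ⟨φ ⟨x, hx⟩, congrArg Subtype.val (φ.symm_apply_apply _)⟩
  · rw [OpenPartialHomeomorph.symm_target, hemb.toOpenPartialHomeomorph_source]
  · obtain ⟨L, hL, hc⟩ := hφ c
    exact ⟨L, hL, hc s, hc t⟩

theorem exists_isLineFoliation : ∃ γ, IsLineFoliation ℝ F.SameLeaf γ := by
  choose γ hγ hγ₀ hγL using F.exists_isometry_range_mem_leaves
  exact ⟨γ, F.equivalence_sameLeaf, hγ, hγ₀,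
    fun x y => F.sameLeaf_iff_of_mem_leaves (hγL x) ⟨0, hγ₀ x⟩ y, F.exists_isFoliatedChart⟩

end GeodesicLineFoliation

/-- Let `F` be a geodesic line foliation of a complete Riemannian
plane `M`. Then the leaf space `M/F` (the quotient of `M` by the relation identifying
points lying on a common leaf), equipped with the quotient topology, is Hausdorff and
homeomorphic to the real line `ℝ`. -/
theorem leaf_space_hausdorff_and_homeomorphic_real_line
    (S : RiemannianSurface)
    (hplane : Nonempty (S.M ≃ₜ (ℝ × ℝ)))
    (F : GeodesicLineFoliation S) :
    T2Space (Quot (fun x y : S.M => ∃ L ∈ F.leaves, x ∈ L ∧ y ∈ L)) ∧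
    Nonempty ((Quot (fun x y : S.M => ∃ L ∈ F.leaves, x ∈ L ∧ y ∈ L)) ≃ₜ ℝ) := by
  obtain ⟨e⟩ := hplane
  have := S.complete
  have : ContractibleSpace S.M := e.contractibleSpace
  have : SecondCountableTopology S.M := e.secondCountableTopology
  obtain ⟨γ, hγ⟩ := F.exists_isLineFoliation
  exact leaf_space_hausdorff_and_homeomorphic_real_line_general hγ
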